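/- arXiv:2205.14478 — 2 statements merged into one kernel-verified Lean document; each statement's English description precedes it below -/
import Mathlib

section
/- Let C be a finite set with |C| ≥ 2, let α, β, ν ∈ (0,1) with α ≤ β, and let N, T be positive integers with T ≤ N and T ≥ max(3·β⁻²·α⁻¹·ln(8/ν), 45·α⁻¹·β⁻¹·ln(12/ν)). Then for every integer F > 24·β·N·ln|C|/ν there exists a family of F functions h₁,…,h_F : C → {1,…,N} such that for every pair of subsets A, B ⊆ C with |A| ≤ βN and |B| ≤ βN, at least (1−ν)·F of the functions h₁,…,h_F are (A,B)-good. -/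
open scoped Classical

/-- `A|_h^{≤T}` for a hash function `h : C → {1,…,N}` encoded as `h : C → Fin N`
(the value `(h c : ℕ) + 1` ranges over `{1,…,N}`, and lands in `{1,…,T}` iff
`(h c : ℕ) < T`). -/
def lowF {C : Type*} [DecidableEq C] {N : ℕ} (T : ℕ) (A : Finset C) (h : C → Fin N) :
    Finset C :=
  A.filter fun c => (h c : ℕ) < T

/-- `Coll^{≤T}(A,h,B)`: elements of `A` hashing to a value in `{1,…,T}` that collide with
a distinct element of `B`. -/
def collF {C : Type*} [DecidableEq C] {N : ℕ} (T : ℕ) (A B : Finset C) (h : C → Fin N) :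
    Finset C :=
  A.filter fun c => (h c : ℕ) < T ∧ ∃ b ∈ B.erase c, h b = h c

/-- `h` is `(A,B)`-good for parameters `a = α`, `b = β` and threshold `T`. -/
def IsGood {C : Type*} [DecidableEq C] {N : ℕ} (a b : ℝ) (T : ℕ) (A B : Finset C)
    (h : C → Fin N) : Prop :=
  (a * N ≤ (A.card : ℝ) →
    ((1 - b) * T * A.card / N ≤ ((lowF T A h).card : ℝ) ∧
      ((lowF T A h).card : ℝ) ≤ (1 + b) * T * A.card / N) ∧
    ((collF T A B h).card : ℝ) ≤ 2 * b * T * A.card / N) ∧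
  ((A.card : ℝ) < a * N →
    ((lowF T A h).card : ℝ) ≤ (1 + b) * T * a ∧
    ((collF T A B h).card : ℝ) ≤ 2 * T * a * b)

/-!
Build `A` and `B` by inserting elements one at a time: those of `A ∩ B`, then those of `B \ A`,
then those of `A \ B`. Given the values already drawn, a new element lands on an occupied low value
with probability at most (number of occupied low values) / `N`, so a suitably compensated
exponential moment of the number of collisions never increases in mean. Markov's inequality turns
this into a tail bound as long as the numbers of low elements of `A` and `B` are near their means,
which Chernoff bounds ensure; hence a uniformly random function is `(A, B)`-good except with
probability at most `ν / 2`. Among `F` independent random functions, by another Chernoff bound, more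
than `ν * F` fail to be `(A, B)`-good with probability at most `exp (-ν * F / 6)`, which beats the
union bound over the at most `|C| ^ (4 * β * N)` pairs `(A, B)`.
-/

open Finset Function Real
open scoped BigOperators

lemma exp_neg_le_quadratic_of_nonneg {x : ℝ} (hx : 0 ≤ x) : exp (-x) ≤ 1 - x + x ^ 2 / 2 := by
  have quadratic_pos : 0 < 1 - x + x ^ 2 / 2 := by nlinarith [sq_nonneg (x - 1)]
  rw [exp_neg, inv_le_iff_one_le_mul₀ (exp_pos x)]
  calc 1 ≤ (1 - x + x ^ 2 / 2) * (1 + x + x ^ 2 / 2) := by nlinarith [sq_nonneg (x ^ 2)]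
    _ ≤ (1 - x + x ^ 2 / 2) * exp x := by
        gcongr
        exact quadratic_le_exp_of_nonneg hx

lemma exp_neg_le_div_of_log_le {ν K y : ℝ} (hν : 0 < ν) (hK : 0 < K) (h : log (K / ν) ≤ y) :
    exp (-y) ≤ ν / K := by
  calc exp (-y) ≤ exp (-log (K / ν)) := by gcongr
    _ = ν / K := by rw [exp_neg, exp_log (by positivity), inv_div]

section Uniform

variable {X κ : Type*} [Fintype X]

lemma dens_filter_le_add {P Q R : X → Prop} [DecidablePred P] [DecidablePred Q] [DecidablePred R]
    (h : ∀ x, P x → Q x ∨ R x) :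
    (dens {x | P x} : ℝ) ≤ dens {x | Q x} + dens {x | R x} := by
  have subset_union : ({x | P x} : Finset X) ⊆ ({x | Q x ∨ R x} : Finset X) :=
    monotone_filter_right _ fun x _ ↦ h x
  rw [filter_or] at subset_union
  exact_mod_cast (dens_le_dens subset_union).trans (dens_union_le _ _)

lemma exists_forall_notMem_of_card_mul_lt_one [Nonempty X] {s : Finset κ} {E : κ → Finset X} {ε : ℝ}
    (hE : ∀ p ∈ s, (dens (E p) : ℝ) ≤ ε) (hε : #s * ε < 1) : ∃ x, ∀ p ∈ s, x ∉ E p := by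
  by_contra! covered
  have biUnion_eq_univ : s.biUnion E = univ :=
    eq_univ_of_forall fun x ↦ mem_biUnion.mpr (covered x)
  have one_le : (1 : ℝ) ≤ #s * ε := by
    calc (1 : ℝ) = dens (s.biUnion E) := by
          rw [biUnion_eq_univ, dens_univ, NNRat.cast_one]
      _ ≤ ∑ p ∈ s, (dens (E p) : ℝ) := mod_cast dens_biUnion_le
      _ ≤ #s * ε := by
          rw [← nsmul_eq_mul]
          exact sum_le_card_nsmul s _ ε hE
  exact hε.not_ge one_le

lemma dens_filter_le_exp_neg_mul_expect {P : X → Prop} [DecidablePred P] {f : X → ℝ} {c : ℝ}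
    (h : ∀ x, P x → c ≤ f x) : (dens {x | P x} : ℝ) ≤ exp (-c) * 𝔼 x, exp (f x) := by
  calc (dens {x | P x} : ℝ) = 𝔼 x, if P x then (1 : ℝ) else 0 := by
        rw [nnratCast_dens, Fintype.expect_eq_sum_div_card, sum_boole]
    _ ≤ 𝔼 x, exp (-c) * exp (f x) := by
        refine expect_le_expect fun x _ ↦ ?_
        split_ifs with hx
        · rw [← exp_add, one_le_exp_iff]
          linarith [h x hx]
        · positivity
    _ = exp (-c) * 𝔼 x, exp (f x) := (mul_expect ..).symm

end Uniform

section RandomFunction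

variable {ι Ω : Type*} [Fintype ι] [DecidableEq ι] [Fintype Ω]

lemma expect_prod_eq_prod_expect (f : ι → Ω → ℝ) :
    𝔼 h : ι → Ω, ∏ i, f i (h i) = ∏ i, 𝔼 v, f i v := by
  simp only [Fintype.expect_eq_sum_div_card, prod_div_distrib, prod_univ_sum,
    Fintype.piFinset_univ, prod_const, card_univ, Fintype.card_fun, Nat.cast_pow]

variable [Nonempty Ω]

lemma expect_expect_update (i : ι) (f : (ι → Ω) → ℝ) :
    𝔼 h : ι → Ω, 𝔼 v : Ω, f (update h i v) = 𝔼 h, f h := by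
  have involutive_swap :
      Involutive fun p : (ι → Ω) × Ω ↦ ((update p.1 i p.2, p.1 i) : (ι → Ω) × Ω) := by
    rintro ⟨h, v⟩
    simp
  calc 𝔼 h : ι → Ω, 𝔼 v : Ω, f (update h i v)
      = 𝔼 p : (ι → Ω) × Ω, f (update p.1 i p.2) := by
        rw [← univ_product_univ, expect_product]
    _ = 𝔼 p : (ι → Ω) × Ω, f p.1 := Fintype.expect_equiv involutive_swap.toPerm _ _ fun _ ↦ rfl
    _ = 𝔼 h, f h := by simp [← univ_product_univ, expect_product]

lemma expect_le_expect_of_update_le (i : ι) {f g : (ι → Ω) → ℝ} {w : (ι → Ω) → Ω → ℝ}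
    (hg : ∀ h, 0 ≤ g h) (hw : ∀ h, 𝔼 v, w h v ≤ 1)
    (hf : ∀ h v, f (update h i v) ≤ g h * w h v) : 𝔼 h, f h ≤ 𝔼 h, g h := by
  rw [← expect_expect_update i f]
  refine expect_le_expect fun h _ ↦ ?_
  calc 𝔼 v, f (update h i v) ≤ 𝔼 v, g h * w h v := expect_le_expect fun v _ ↦ hf h v
    _ = g h * 𝔼 v, w h v := (mul_expect ..).symm
    _ ≤ g h := mul_le_of_le_one_right (hg h) (hw h)

variable [DecidableEq Ω]

lemma expect_exp_mul_card_filter_mem (S : Finset Ω) (A : Finset ι) (t : ℝ) :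
    𝔼 h : ι → Ω, exp (t * #{i ∈ A | h i ∈ S}) = (1 + S.dens * (exp t - 1)) ^ #A := by
  have exp_eq_prod (h : ι → Ω) : exp (t * #{i ∈ A | h i ∈ S}) =
      ∏ i, if i ∈ A then 1 + (if h i ∈ S then exp t - 1 else 0) else 1 := by
    rw [card_filter, Nat.cast_sum, mul_sum, exp_sum, prod_ite_mem, univ_inter]
    refine prod_congr rfl fun i _ ↦ ?_
    split_ifs <;> simp
  have expect_factor : 𝔼 v : Ω, (1 + if v ∈ S then exp t - 1 else 0) =
      1 + S.dens * (exp t - 1) := by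
    rw [expect_add_distrib, Fintype.expect_const, Fintype.expect_eq_sum_div_card, sum_ite_mem,
      univ_inter, sum_const, nsmul_eq_mul, nnratCast_dens, div_mul_eq_mul_div]
  simp only [exp_eq_prod]
  rw [expect_prod_eq_prod_expect
    (fun i v ↦ if i ∈ A then 1 + (if v ∈ S then exp t - 1 else 0) else 1)]
  have expect_ite (i : ι) : (𝔼 v : Ω, if i ∈ A then 1 + (if v ∈ S then exp t - 1 else 0) else 1) =
      if i ∈ A then 1 + S.dens * (exp t - 1) else 1 := by
    split_ifs
    · exact expect_factor
    · exact Fintype.expect_const 1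
  simp only [expect_ite, prod_ite_mem, univ_inter, prod_const]

lemma expect_exp_mul_card_filter_mem_le (S : Finset Ω) (A : Finset ι) (t : ℝ) :
    𝔼 h : ι → Ω, exp (t * #{i ∈ A | h i ∈ S}) ≤ exp (#A * S.dens * (exp t - 1)) := by
  have dens_le_one : (S.dens : ℝ) ≤ 1 := mod_cast S.dens_le_one
  have base_nonneg : 0 ≤ 1 + (S.dens : ℝ) * (exp t - 1) := by
    nlinarith [exp_pos t, NNRat.cast_nonneg (α := ℝ) S.dens]
  rw [expect_exp_mul_card_filter_mem]
  calc (1 + S.dens * (exp t - 1)) ^ #A ≤ exp (S.dens * (exp t - 1)) ^ #A := by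
        gcongr
        linarith [add_one_le_exp (S.dens * (exp t - 1))]
    _ = exp (#A * S.dens * (exp t - 1)) := by rw [← exp_nat_mul, mul_assoc]

lemma dens_lt_card_filter_mem_le (S : Finset Ω) (A : Finset ι) {M d : ℝ} (hd : 0 ≤ d)
    (hM : #A * S.dens ≤ M) :
    (dens {h : ι → Ω | (1 + d) * M < #{i ∈ A | h i ∈ S}} : ℝ) ≤ exp (-(d ^ 2 / (d + 2) * M)) := by
  have M_nonneg : 0 ≤ M := le_trans (by positivity) hM
  have exp_log_one_add : exp (log (1 + d)) = 1 + d := exp_log (by linarith)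
  have log_nonneg : 0 ≤ log (1 + d) := log_nonneg (by linarith)
  have exponent_le : d * M - log (1 + d) * ((1 + d) * M) ≤ -(d ^ 2 / (d + 2) * M) := by
    calc d * M - log (1 + d) * ((1 + d) * M)
        ≤ d * M - 2 * d / (d + 2) * ((1 + d) * M) := by
          gcongr
          exact le_log_one_add_of_nonneg hd
      _ = -(d ^ 2 / (d + 2) * M) := by field_simp; ring
  calc (dens {h : ι → Ω | (1 + d) * M < #{i ∈ A | h i ∈ S}} : ℝ)
      ≤ exp (-(log (1 + d) * ((1 + d) * M))) *
          𝔼 h : ι → Ω, exp (log (1 + d) * #{i ∈ A | h i ∈ S}) :=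
        dens_filter_le_exp_neg_mul_expect fun h hh ↦ by gcongr
    _ ≤ exp (-(log (1 + d) * ((1 + d) * M))) * exp (d * M) := by
        gcongr
        refine (expect_exp_mul_card_filter_mem_le S A _).trans (exp_le_exp.mpr ?_)
        rw [exp_log_one_add, add_sub_cancel_left, mul_comm]
        gcongr
    _ ≤ exp (-(d ^ 2 / (d + 2) * M)) := by
        rw [← exp_add, exp_le_exp]
        linarith

lemma dens_card_filter_mem_lt_le (S : Finset Ω) (A : Finset ι) {d : ℝ} (hd : 0 ≤ d) :
    (dens {h : ι → Ω | #{i ∈ A | h i ∈ S} < (1 - d) * (#A * S.dens)} : ℝ) ≤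
      exp (-(d ^ 2 / 2 * (#A * S.dens))) := by
  set M : ℝ := #A * S.dens
  have M_nonneg : 0 ≤ M := by positivity
  calc (dens {h : ι → Ω | #{i ∈ A | h i ∈ S} < (1 - d) * M} : ℝ)
      ≤ exp (-(-d * ((1 - d) * M))) * 𝔼 h : ι → Ω, exp (-d * #{i ∈ A | h i ∈ S}) :=
        dens_filter_le_exp_neg_mul_expect fun h hh ↦ by nlinarith
    _ ≤ exp (-(-d * ((1 - d) * M))) * exp (M * (exp (-d) - 1)) := by
        gcongr
        exact expect_exp_mul_card_filter_mem_le S A _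
    _ ≤ exp (-(d ^ 2 / 2 * M)) := by
        rw [← exp_add, exp_le_exp]
        nlinarith [mul_le_mul_of_nonneg_left (exp_neg_le_quadratic_of_nonneg hd) M_nonneg]

end RandomFunction

section LowAndColliding

variable {C : Type*} [DecidableEq C] {N T : ℕ} {A B : Finset C} {x : C}

lemma lowF_eq_filter_mem (A : Finset C) (h : C → Fin N) :
    lowF T A h = {c ∈ A | h c ∈ ({v | (v : ℕ) < T} : Finset (Fin N))} := by
  simp [lowF]

lemma lowF_update_of_notMem (hx : x ∉ A) (h : C → Fin N) (v : Fin N) :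
    lowF T A (update h x v) = lowF T A h := by
  refine filter_congr fun c hc ↦ ?_
  rw [update_of_ne (ne_of_mem_of_not_mem hc hx)]

lemma collF_update_of_notMem (hxA : x ∉ A) (hxB : x ∉ B) (h : C → Fin N) (v : Fin N) :
    collF T A B (update h x v) = collF T A B h := by
  refine filter_congr fun c hc ↦ ?_
  rw [update_of_ne (ne_of_mem_of_not_mem hc hxA)]
  refine and_congr_right fun _ ↦ exists_congr fun b ↦ and_congr_right fun hb ↦ ?_
  rw [update_of_ne (ne_of_mem_of_not_mem (mem_of_mem_erase hb) hxB)]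

lemma card_lowF_insert (hx : x ∉ A) (h : C → Fin N) :
    #(lowF T (insert x A) h) = #(lowF T A h) + if (h x : ℕ) < T then 1 else 0 := by
  rw [lowF, filter_insert]
  split_ifs
  · exact card_insert_of_notMem fun hx' ↦ hx (mem_of_mem_filter x hx')
  · rfl

lemma card_collF_insert_left_le (A B : Finset C) (x : C) (h : C → Fin N) :
    #(collF T (insert x A) B h) ≤
      #(collF T A B h) + if (h x : ℕ) < T ∧ ∃ s ∈ B.erase x, h s = h x then 1 else 0 := by
  rw [collF, filter_insert]
  split_ifs
  · exact card_insert_le _ _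
  · exact le_rfl

-- If `x` collides with `s ∈ A ⊆ B`, every other element of `A` sharing the value `h x` already
-- collides with `s`, so `s` is the only possible new collision.
lemma card_collF_insert_right_le (hAB : A ⊆ B) (x : C) (h : C → Fin N) :
    #(collF T A (insert x B) h) ≤
      #(collF T A B h) + if (h x : ℕ) < T ∧ ∃ s ∈ A, h s = h x then 1 else 0 := by
  have collides_of_notMem {c : C} (hc : c ∈ collF T A (insert x B) h) (hc' : c ∉ collF T A B h) :
      c ∈ A ∧ (h c : ℕ) < T ∧ h c = h x := by
    simp only [collF, mem_filter, mem_erase, mem_insert] at hc hc'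
    grind
  split_ifs with hx
  · obtain ⟨-, s, hsA, hsx⟩ := hx
    refine (card_le_card fun c hc ↦ ?_).trans (card_insert_le s _)
    by_contra hcs
    obtain ⟨hcs, hc'⟩ := not_or.mp (mem_insert.not.mp hcs)
    obtain ⟨hcA, hcT, hcx⟩ := collides_of_notMem hc hc'
    have s_mem : s ∈ B.erase c := mem_erase.mpr ⟨Ne.symm hcs, hAB hsA⟩
    exact hc' (mem_filter.mpr ⟨hcA, hcT, s, s_mem, hsx.trans hcx.symm⟩)
  · refine card_le_card fun c hc ↦ ?_
    by_contra hc'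
    obtain ⟨hcA, hcT, hcx⟩ := collides_of_notMem hc hc'
    exact hx ⟨hcx ▸ hcT, c, hcA, hcx⟩

end LowAndColliding

section CollisionPotential

variable {C : Type*} [DecidableEq C] {N T : ℕ} {l θ : ℝ}

/-- The exponential potential `exp (l · |Coll(A,h,B)| - θ · |A|_h| · |B|_h| / T)`, in which the
number of collisions is offset by a multiple of `|A|_h| · |B|_h| / T`, roughly the number of
collisions that the low elements of `A` and `B` should produce. Compensating with the realised
rather than the expected numbers of low elements makes its mean decrease as elements are inserted
one at a time. -/
noncomputable def collisionPotential (l θ : ℝ) (T : ℕ) (A B : Finset C) (h : C → Fin N) : ℝ :=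
  exp (l * #(collF T A B h) - θ * (#(lowF T A h) * #(lowF T B h)) / T)

lemma sum_exp_ite_sub_le_card {Ω : Type*} [DecidableEq Ω] {S I : Finset Ω} {k p q : ℝ}
    (hk : exp k ≤ 1 + p) (hp : 0 ≤ p) (hI : #I ≤ q) :
    ∑ v ∈ S, exp ((if v ∈ I then k else 0) - p * q / #S) ≤ #S := by
  obtain rfl | hS := S.eq_empty_or_nonempty
  · simp
  have card_ne_zero : (#S : ℝ) ≠ 0 := mod_cast hS.card_ne_zero
  calc ∑ v ∈ S, exp ((if v ∈ I then k else 0) - p * q / #S)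
      ≤ ∑ v ∈ S, (1 + if v ∈ I then p else 0) * exp (-(p * q / #S)) := by
        refine sum_le_sum fun v _ ↦ ?_
        rw [sub_eq_add_neg, exp_add]
        gcongr
        split_ifs
        · exact hk
        · simp
    _ = (#S + #(S ∩ I) * p) * exp (-(p * q / #S)) := by
        rw [← sum_mul, sum_add_distrib, sum_ite_mem]
        simp
    _ ≤ (#S + q * p) * exp (-(p * q / #S)) := by
        gcongr
        exact (Nat.cast_le.mpr (card_le_card inter_subset_right)).trans hI
    _ = #S * ((p * q / #S + 1) * exp (-(p * q / #S))) := by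
        rw [← mul_assoc (#S : ℝ), mul_add_one, mul_div_cancel₀ _ card_ne_zero,
          add_comm _ (#S : ℝ), mul_comm p q]
    _ ≤ #S * (exp (p * q / #S) * exp (-(p * q / #S))) := by
        gcongr
        exact add_one_le_exp _
    _ = #S := by rw [← exp_add, add_neg_cancel, exp_zero, mul_one]

lemma expect_ite_exp_sub_le_one {Ω : Type*} [Fintype Ω] [DecidableEq Ω] {S I : Finset Ω}
    {k p q : ℝ} (hk : exp k ≤ 1 + p) (hp : 0 ≤ p) (hI : #I ≤ q) :
    𝔼 v : Ω, (if v ∈ S then exp ((if v ∈ I then k else 0) - p * q / #S) else 1) ≤ 1 := by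
  rw [Fintype.expect_eq_sum_div_card]
  refine div_le_one_of_le₀ ?_ (Nat.cast_nonneg _)
  calc ∑ v : Ω, (if v ∈ S then exp ((if v ∈ I then k else 0) - p * q / #S) else 1)
      = ∑ v ∈ S, exp ((if v ∈ I then k else 0) - p * q / #S) + #Sᶜ := by
        rw [sum_ite]
        simp [filter_not, compl_eq_univ_sdiff]
    _ ≤ #S + #Sᶜ := by
        gcongr
        exact sum_exp_ite_sub_le_card hk hp hI
    _ = Fintype.card Ω := mod_cast card_add_card_compl S

variable [Fintype C] [NeZero N]

lemma expect_collisionPotential_le_of_insert (hTN : T ≤ N) (hl : 0 ≤ l) (hθ : 0 ≤ θ) {m : ℕ}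
    (hm : exp (m * l) ≤ 1 + m * θ) {A B A' B' S : Finset C} {x : C}
    (hxA : x ∉ A) (hxB : x ∉ B) (hxS : x ∉ S)
    (hcoll : ∀ h : C → Fin N, #(collF T A' B' h) ≤ #(collF T A B h) +
      if (h x : ℕ) < T ∧ ∃ s ∈ S, h s = h x then m else 0)
    (hlow : ∀ h : C → Fin N, #(lowF T A h) * #(lowF T B h) +
      (if (h x : ℕ) < T then m * #(lowF T S h) else 0) ≤ #(lowF T A' h) * #(lowF T B' h)) :
    𝔼 h : C → Fin N, collisionPotential l θ T A' B' h ≤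
      𝔼 h : C → Fin N, collisionPotential l θ T A B h := by
  set L : Finset (Fin N) := {v | (v : ℕ) < T} with hL
  have card_L : #L = T := by simp [hL, Fin.card_filter_val_lt, hTN]
  refine expect_le_expect_of_update_le x
    (w := fun h v ↦ if v ∈ L then
      exp ((if v ∈ (lowF T S h).image h then m * l else 0) - m * θ * #(lowF T S h) / #L) else 1)
    (fun h ↦ (exp_pos _).le)
    (fun h ↦ expect_ite_exp_sub_le_one hm (by positivity) (mod_cast card_image_le)) fun h v ↦ ?_
  have mem_L : v ∈ L ↔ (v : ℕ) < T := by simp [hL]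
  have collides_iff : (v : ℕ) < T ∧ (∃ s ∈ S, update h x v s = v) ↔
      (v : ℕ) < T ∧ v ∈ (lowF T S h).image h := by
    simp only [lowF, mem_image, mem_filter]
    grind [update_of_ne]
  have hcoll_update := hcoll (update h x v)
  have hlow_update := hlow (update h x v)
  simp only [update_self, collides_iff, lowF_update_of_notMem hxA, lowF_update_of_notMem hxB,
    lowF_update_of_notMem hxS, collF_update_of_notMem hxA hxB] at hcoll_update hlow_update
  simp only [collisionPotential, mem_L, card_L]
  have coll_le : l * #(collF T A' B' (update h x v)) ≤ l * (#(collF T A B h) +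
      if (v : ℕ) < T ∧ v ∈ (lowF T S h).image h then (m : ℝ) else 0) := by
    gcongr
    exact_mod_cast hcoll_update
  have low_le : θ * (#(lowF T A h) * #(lowF T B h) +
      if (v : ℕ) < T then (m : ℝ) * #(lowF T S h) else 0) / T ≤
      θ * (#(lowF T A' (update h x v)) * #(lowF T B' (update h x v))) / T := by
    gcongr
    exact_mod_cast hlow_update
  by_cases hv : (v : ℕ) < T
  · simp only [hv, if_true, true_and, ← exp_add, exp_le_exp] at coll_le low_le ⊢
    rw [mul_add, add_div, ← mul_assoc θ (m : ℝ), mul_comm θ (m : ℝ)] at low_le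
    split_ifs at coll_le ⊢ <;> linarith
  · simp only [hv, if_false, false_and, mul_one, exp_le_exp, add_zero] at coll_le low_le ⊢
    linarith

lemma expect_collisionPotential_self_le_one (hTN : T ≤ N) (hl : 0 ≤ l)
    (hθ : exp (2 * l) ≤ 1 + 2 * θ) (D : Finset C) :
    𝔼 h : C → Fin N, collisionPotential l θ T D D h ≤ 1 := by
  have θ_nonneg : 0 ≤ θ := by linarith [one_le_exp (x := 2 * l) (by positivity)]
  induction D using Finset.induction_on with
  | empty => simp [collisionPotential, collF, lowF]
  | insert x D hx ih =>
    refine le_trans (expect_collisionPotential_le_of_insert hTN hl θ_nonneg (m := 2) (S := D)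
      (mod_cast hθ) hx hx hx (fun h ↦ ?_) fun h ↦ ?_) ih
    · have left_le := card_collF_insert_left_le (T := T) D (insert x D) x h
      have right_le := card_collF_insert_right_le (T := T) (subset_refl D) x h
      rw [erase_insert hx] at left_le
      split_ifs at * <;> omega
    · rw [card_lowF_insert hx]
      split_ifs <;> nlinarith

lemma exp_le_one_add_of_exp_two_mul_le (hθ : exp (2 * l) ≤ 1 + 2 * θ) : exp l ≤ 1 + θ := by
  rw [two_mul, exp_add] at hθ
  nlinarith [sq_nonneg (exp l - 1)]

lemma expect_collisionPotential_union_le_one (hTN : T ≤ N) (hl : 0 ≤ l)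
    (hθ : exp (2 * l) ≤ 1 + 2 * θ) (A E : Finset C) :
    𝔼 h : C → Fin N, collisionPotential l θ T A (A ∪ E) h ≤ 1 := by
  have θ_nonneg : 0 ≤ θ := by linarith [one_le_exp (x := 2 * l) (by positivity)]
  induction E using Finset.induction_on with
  | empty => simpa using expect_collisionPotential_self_le_one hTN hl hθ A
  | insert x E _ ih =>
    rw [union_insert]
    by_cases hx : x ∈ A ∪ E
    · rwa [insert_eq_of_mem hx]
    have hxA : x ∉ A := fun hxA ↦ hx (mem_union_left E hxA)
    refine le_trans (expect_collisionPotential_le_of_insert hTN hl θ_nonneg (m := 1) (S := A)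
      (by simpa using exp_le_one_add_of_exp_two_mul_le hθ) hxA hx hxA
      (card_collF_insert_right_le subset_union_left x) fun h ↦ ?_) ih
    rw [card_lowF_insert hx]
    split_ifs <;> nlinarith

theorem expect_collisionPotential_le_one (hTN : T ≤ N) (hl : 0 ≤ l)
    (hθ : exp (2 * l) ≤ 1 + 2 * θ) (A B : Finset C) :
    𝔼 h : C → Fin N, collisionPotential l θ T A B h ≤ 1 := by
  have θ_nonneg : 0 ≤ θ := by linarith [one_le_exp (x := 2 * l) (by positivity)]
  suffices key : ∀ E, Disjoint E B →
      𝔼 h : C → Fin N, collisionPotential l θ T (A ∩ B ∪ E) B h ≤ 1 by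
    have := key (A \ B) sdiff_disjoint
    rwa [union_comm, sdiff_union_inter] at this
  intro E
  induction E using Finset.induction_on with
  | empty =>
    intro _
    have := expect_collisionPotential_union_le_one (N := N) hTN hl hθ (A ∩ B) B
    rwa [union_eq_right.mpr inter_subset_right, ← union_empty (A ∩ B)] at this
  | insert x E hx ih =>
    intro disjoint
    obtain ⟨hxB, disjoint⟩ := disjoint_insert_left.mp disjoint
    have hxA : x ∉ A ∩ B ∪ E := by simp [hxB, hx]
    rw [union_insert]
    refine le_trans (expect_collisionPotential_le_of_insert hTN hl θ_nonneg (m := 1) (S := B)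
      (by simpa using exp_le_one_add_of_exp_two_mul_le hθ) hxA hxB hxB
      (fun h ↦ ?_) fun h ↦ ?_) (ih disjoint)
    · have := card_collF_insert_left_le (T := T) (A ∩ B ∪ E) B x h
      rwa [erase_eq_of_notMem hxB] at this
    · rw [card_lowF_insert hxA]
      split_ifs <;> nlinarith

end CollisionPotential

section Tails

variable {C : Type*} [Fintype C] [DecidableEq C] {N T : ℕ}

lemma dens_filter_val_lt (hTN : T ≤ N) :
    (dens ({v | (v : ℕ) < T} : Finset (Fin N)) : ℝ) = T / N := by
  rw [nnratCast_dens, Fintype.card_fin, Fin.card_filter_val_lt, min_eq_right hTN]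

variable [NeZero N]

lemma dens_lt_card_lowF_le (hTN : T ≤ N) (A : Finset C) {M d : ℝ} (hd : 0 ≤ d)
    (hM : #A * (T / N) ≤ M) :
    (dens {h : C → Fin N | (1 + d) * M < #(lowF T A h)} : ℝ) ≤ exp (-(d ^ 2 / (d + 2) * M)) := by
  simp only [lowF_eq_filter_mem]
  exact dens_lt_card_filter_mem_le _ A hd (by rwa [dens_filter_val_lt hTN])

lemma dens_card_lowF_lt_le (hTN : T ≤ N) (A : Finset C) {d : ℝ} (hd : 0 ≤ d) :
    (dens {h : C → Fin N | #(lowF T A h) < (1 - d) * (#A * (T / N))} : ℝ) ≤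
      exp (-(d ^ 2 / 2 * (#A * (T / N)))) := by
  simp only [lowF_eq_filter_mem, ← dens_filter_val_lt hTN]
  exact dens_card_filter_mem_lt_le _ A hd

-- `θ = 7 / 50` maximises `log (1 + 2 * θ) - (5 / 4) ^ 2 * θ`, and the maximum exceeds `1 / 45`.
lemma dens_lt_card_collF_and_le (hT : 0 < T) (hTN : T ≤ N) (A B : Finset C) {M β : ℝ}
    (hM : 0 ≤ M) (hβ : 0 ≤ β) :
    (dens {h : C → Fin N | 2 * β * M < #(collF T A B h) ∧
      #(lowF T A h) ≤ 5 / 4 * M ∧ #(lowF T B h) ≤ 5 / 4 * (β * T)} : ℝ) ≤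
      exp (-(β * M / 45)) := by
  have T_ne_zero : (T : ℝ) ≠ 0 := mod_cast hT.ne'
  set l : ℝ := log (1 + 7 / 25) / 2 with hl
  have exp_two_mul : exp (2 * l) ≤ 1 + 2 * (7 / 50) := by
    rw [hl, mul_div_cancel₀ _ two_ne_zero, exp_log (by norm_num)]
    norm_num
  have two_mul_l_ge : 14 / 57 ≤ 2 * l := by
    have := le_log_one_add_of_nonneg (show (0 : ℝ) ≤ 7 / 25 by norm_num)
    norm_num at this
    linarith
  calc _ ≤ exp (-(β * M / 45)) * 𝔼 h : C → Fin N, collisionPotential l (7 / 50) T A B h := by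
        refine dens_filter_le_exp_neg_mul_expect fun h ⟨hcoll, hlowA, hlowB⟩ ↦ ?_
        have coll_ge : l * (2 * β * M) ≤ l * #(collF T A B h) := by
          gcongr
        have low_le : 7 / 50 * (#(lowF T A h) * #(lowF T B h) : ℝ) / T ≤ 7 / 32 * (β * M) := by
          calc 7 / 50 * (#(lowF T A h) * #(lowF T B h) : ℝ) / T
              ≤ 7 / 50 * (5 / 4 * M * (5 / 4 * (β * T))) / T := by gcongr
            _ = 7 / 32 * (β * M) * T / T := by ring
            _ = 7 / 32 * (β * M) := mul_div_cancel_right₀ _ T_ne_zero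
        nlinarith [mul_nonneg hβ hM]
    _ ≤ exp (-(β * M / 45)) :=
        mul_le_of_le_one_right (exp_pos _).le
          (expect_collisionPotential_le_one hTN (by linarith) exp_two_mul A B)

lemma dens_lt_card_collF_le (hT : 0 < T) (hTN : T ≤ N) (A B : Finset C) {M β : ℝ}
    (hM : #A * (T / N) ≤ M) (hB : #B ≤ β * N) :
    (dens {h : C → Fin N | 2 * β * M < #(collF T A B h)} : ℝ) ≤
      exp (-(β * M / 45)) + (exp (-(M / 36)) + exp (-(β * T / 36))) := by
  have N_pos : (0 : ℝ) < N := mod_cast Nat.pos_of_neZero N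
  have M_nonneg : 0 ≤ M := le_trans (by positivity) hM
  have β_nonneg : 0 ≤ β := nonneg_of_mul_nonneg_left ((Nat.cast_nonneg _).trans hB) N_pos
  have hBT : #B * (T / N) ≤ β * T := by
    calc #B * (T / N : ℝ) ≤ β * N * (T / N) := by gcongr
      _ = β * T := by field_simp
  have low_tail {D : Finset C} {K : ℝ} (hK : #D * (T / N) ≤ K) :
      (dens {h : C → Fin N | 5 / 4 * K < #(lowF T D h)} : ℝ) ≤ exp (-(K / 36)) := by
    have := dens_lt_card_lowF_le hTN D (by norm_num : (0 : ℝ) ≤ 1 / 4) hK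
    norm_num at this
    rwa [one_div_mul_eq_div] at this
  refine (dens_filter_le_add fun h hcoll ↦ ?_).trans (add_le_add
    (dens_lt_card_collF_and_le hT hTN A B M_nonneg β_nonneg)
    ((dens_filter_le_add fun h ↦ id).trans (add_le_add (low_tail hM) (low_tail hBT))))
  by_cases hlowA : 5 / 4 * M < #(lowF T A h)
  · exact .inr (.inl hlowA)
  by_cases hlowB : 5 / 4 * (β * T) < #(lowF T B h)
  · exact .inr (.inr hlowB)
  exact .inl ⟨hcoll, not_lt.mp hlowA, not_lt.mp hlowB⟩

end Tails

section Good

variable {C : Type*} [DecidableEq C] {N T : ℕ} [NeZero N] {a b : ℝ}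

lemma isGood_iff {A B : Finset C} {h : C → Fin N} {M : ℝ} (hT : 0 < T)
    (hM : M = (max (#A * (T / N)) (a * T) : ℝ)) :
    IsGood a b T A B h ↔ (a * N ≤ #A → (1 - b) * (#A * (T / N)) ≤ #(lowF T A h)) ∧
      #(lowF T A h) ≤ (1 + b) * M ∧ #(collF T A B h) ≤ 2 * b * M := by
  have N_pos : (0 : ℝ) < N := mod_cast Nat.pos_of_neZero N
  have T_pos : (0 : ℝ) < T := mod_cast hT
  have mean_le_iff : a * T ≤ #A * (T / N) ↔ a * N ≤ #A := by
    rw [mul_div_assoc', le_div_iff₀ N_pos, mul_right_comm, mul_le_mul_iff_left₀ T_pos]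
  have div_eq (k : ℝ) : k * T * #A / N = k * (#A * (T / N)) := by ring
  rw [IsGood, div_eq, div_eq, div_eq]
  by_cases hA : a * N ≤ #A
  · rw [max_eq_left (mean_le_iff.mpr hA)] at hM
    simp [hA, hA.not_gt, hM, and_assoc]
  · rw [max_eq_right (le_of_not_ge (mean_le_iff.not.mpr hA))] at hM
    simp only [hA, lt_of_not_ge hA, hM, false_imp_iff, true_and, true_imp_iff]
    ring_nf

lemma dens_not_isGood_le [Fintype C] {ν : ℝ} (ha0 : 0 < a) (ha1 : a ≤ 1) (hb0 : 0 < b)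
    (hb1 : b ≤ 1) (hν : 0 < ν) (hT : 0 < T) (hTN : T ≤ N) (h8 : log (8 / ν) ≤ b ^ 2 / 3 * (a * T))
    (h12 : log (12 / ν) ≤ b * (a * T) / 45) (A B : Finset C) (hB : #B ≤ b * N) :
    (dens {h : C → Fin N | ¬ IsGood a b T A B h} : ℝ) ≤ ν / 2 := by
  have T_pos : (0 : ℝ) < T := mod_cast hT
  have N_pos : (0 : ℝ) < N := mod_cast Nat.pos_of_neZero N
  set M : ℝ := max (#A * (T / N)) (a * T) with hM
  have mean_le : #A * (T / N : ℝ) ≤ M := le_max_left _ _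
  have le_M : a * T ≤ M := le_max_right _ _
  have lower_tail : (dens {h : C → Fin N |
      a * N ≤ #A ∧ #(lowF T A h) < (1 - b) * (#A * (T / N))} : ℝ) ≤ ν / 8 := by
    by_cases hA : a * N ≤ #A
    · simp only [hA, true_and]
      refine (dens_card_lowF_lt_le hTN A hb0.le).trans (exp_neg_le_div_of_log_le hν (by simp) ?_)
      calc log (8 / ν) ≤ b ^ 2 / 3 * (a * N * (T / N)) := by
            rwa [mul_assoc, mul_div_cancel₀ _ N_pos.ne']
        _ ≤ b ^ 2 / 2 * (#A * (T / N)) := by gcongr; norm_num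
    · simp only [hA, false_and, filter_false, dens_empty, NNRat.cast_zero]
      positivity
  have upper_tail : (dens {h : C → Fin N | (1 + b) * M < #(lowF T A h)} : ℝ) ≤ ν / 8 := by
    refine (dens_lt_card_lowF_le hTN A hb0.le mean_le).trans
      (exp_neg_le_div_of_log_le hν (by simp) ?_)
    calc log (8 / ν) ≤ b ^ 2 / 3 * (a * T) := h8
      _ ≤ b ^ 2 / (b + 2) * M := by gcongr; linarith
  have coll_tail : (dens {h : C → Fin N | 2 * b * M < #(collF T A B h)} : ℝ) ≤
      ν / 12 + (ν / 12 + ν / 12) := by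
    refine (dens_lt_card_collF_le hT hTN A B mean_le hB).trans ?_
    gcongr <;> refine exp_neg_le_div_of_log_le hν (by simp) (h12.trans ?_)
    · gcongr
    · nlinarith [mul_pos ha0 T_pos]
    · nlinarith [mul_pos hb0 T_pos]
  calc (dens {h : C → Fin N | ¬ IsGood a b T A B h} : ℝ)
      ≤ ν / 8 + (ν / 8 + (ν / 12 + (ν / 12 + ν / 12))) := by
        refine (dens_filter_le_add fun h hbad ↦ ?_).trans (add_le_add lower_tail
          ((dens_filter_le_add fun h ↦ id).trans (add_le_add upper_tail coll_tail)))
        rw [isGood_iff hT hM] at hbad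
        grind
    _ = ν / 2 := by ring

end Good

section Family

lemma card_filter_card_le_le_pow {C : Type*} [Fintype C] (m : ℕ) :
    #{A : Finset C | #A ≤ m} ≤ (Fintype.card C + 1) ^ m := by
  set n := Fintype.card C
  have subset_biUnion : ({A : Finset C | #A ≤ m} : Finset (Finset C)) ⊆
      (range (m + 1)).biUnion fun k ↦ powersetCard k univ := fun A hA ↦ by
    simpa [Nat.lt_succ_iff] using hA
  calc #{A : Finset C | #A ≤ m} ≤ ∑ k ∈ range (m + 1), #(powersetCard k (univ : Finset C)) :=
        (card_le_card subset_biUnion).trans card_biUnion_le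
    _ ≤ ∑ k ∈ range (m + 1), n ^ k * m.choose k := by
        refine sum_le_sum fun k hk ↦ ?_
        rw [card_powersetCard, card_univ]
        exact (Nat.choose_le_pow n k).trans
          (Nat.le_mul_of_pos_right _ (Nat.choose_pos (Nat.lt_succ_iff.mp (mem_range.mp hk))))
    _ = (n + 1) ^ m := by simp [add_pow]

lemma card_filter_cast_card_le_le_exp {C : Type*} [Fintype C] (hC : 2 ≤ Fintype.card C) {r : ℝ}
    (hr : 0 ≤ r) :
    (#{A : Finset C | (#A : ℝ) ≤ r} : ℝ) ≤ exp (2 * r * log (Fintype.card C)) := by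
  have two_le : (2 : ℝ) ≤ Fintype.card C := mod_cast hC
  calc (#{A : Finset C | (#A : ℝ) ≤ r} : ℝ) = #{A : Finset C | #A ≤ ⌊r⌋₊} := by
        simp only [Nat.le_floor_iff hr]
    _ ≤ (Fintype.card C + 1) ^ ⌊r⌋₊ := mod_cast card_filter_card_le_le_pow _
    _ ≤ ((Fintype.card C : ℝ) ^ 2) ^ ⌊r⌋₊ := by
        gcongr
        nlinarith
    _ = exp (2 * ⌊r⌋₊ * log (Fintype.card C)) := by
        have cast_exponent : (2 * ⌊r⌋₊ : ℝ) = (2 * ⌊r⌋₊ : ℕ) := by push_cast; rfl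
        rw [← pow_mul, cast_exponent, exp_nat_mul, exp_log (by linarith)]
    _ ≤ exp (2 * r * log (Fintype.card C)) := by
        gcongr
        exact Nat.floor_le hr

lemma card_product_filter_card_le_mul_exp_neg_lt_one {C : Type*} [Fintype C]
    (hC : 2 ≤ Fintype.card C) {r y : ℝ} (hr : 0 ≤ r) (hy : 4 * r * log (Fintype.card C) < y) :
    #(({A | #A ≤ r} : Finset (Finset C)) ×ˢ ({B | #B ≤ r} : Finset (Finset C))) * exp (-y) < 1 := by
  set L := log (Fintype.card C)
  calc _ ≤ exp (2 * r * L) * exp (2 * r * L) * exp (-y) := by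
        rw [card_product, Nat.cast_mul]
        gcongr <;> exact card_filter_cast_card_le_le_exp hC hr
    _ < 1 := by
        rw [← exp_add, ← exp_add, exp_lt_one_iff]
        linarith

lemma exists_forall_le_card_filter {ι Ω κ : Type*} [Fintype ι] [Fintype Ω] [Nonempty Ω]
    {s : Finset κ} {P : κ → Ω → Prop} {δ : ℝ} (hP : ∀ p ∈ s, (dens {ω | ¬ P p ω} : ℝ) ≤ δ)
    (hs : #s * exp (-(Fintype.card ι * δ / 3)) < 1) :
    ∃ H : ι → Ω, ∀ p ∈ s, (1 - 2 * δ) * Fintype.card ι ≤ (#{i | P p (H i)} : ℝ) := by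
  set n : ℝ := (Fintype.card ι : ℝ)
  have tail (p) (hp : p ∈ s) :
      (dens {H : ι → Ω | 2 * (n * δ) < #{i | ¬ P p (H i)}} : ℝ) ≤ exp (-(n * δ / 3)) := by
    have := dens_lt_card_filter_mem_le {ω | ¬ P p ω} (univ : Finset ι) zero_le_one (M := n * δ)
      (by rw [card_univ]; gcongr; exact hP p hp)
    norm_num at this
    rwa [one_div_mul_eq_div] at this
  obtain ⟨H, hH⟩ := exists_forall_notMem_of_card_mul_lt_one tail hs
  refine ⟨H, fun p hp ↦ ?_⟩
  have not_le : #{i | ¬ P p (H i)} ≤ 2 * (n * δ) := by simpa using hH p hp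
  have add_eq : (#{i | P p (H i)} + #{i | ¬ P p (H i)} : ℝ) = n := by
    rw [← Nat.cast_add, card_filter_add_card_filter_not, card_univ]
  linarith

end Family

theorem stmt6_general {C : Type*} [Fintype C] [DecidableEq C] (hC : 2 ≤ Fintype.card C)
    (a b ν : ℝ) (ha0 : 0 < a) (ha1 : a < 1) (hb0 : 0 < b) (hb1 : b < 1) (hν0 : 0 < ν)
    (N T : ℕ) (hT : 0 < T) (hTN : T ≤ N)
    (hTlb : max (3 * b⁻¹ ^ 2 * a⁻¹ * log (8 / ν)) (45 * a⁻¹ * b⁻¹ * log (12 / ν)) ≤ T)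
    (F : ℕ) (hF : 24 * b * N * log (Fintype.card C) / ν < F) :
    ∃ h : Fin F → C → Fin N, ∀ A B : Finset C, #A ≤ b * N → #B ≤ b * N →
      (1 - ν) * F ≤ #{i | IsGood a b T A B (h i)} := by
  have : NeZero N := ⟨by omega⟩
  have h8 : log (8 / ν) ≤ b ^ 2 / 3 * (a * T) := by
    have := (le_max_left _ _).trans hTlb
    field_simp at this ⊢
    linarith
  have h12 : log (12 / ν) ≤ b * (a * T) / 45 := by
    have := (le_max_right _ _).trans hTlb
    field_simp at this ⊢
    linarith
  set small : Finset (Finset C) := {A | #A ≤ b * N}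
  have union_bound : #(small ×ˢ small) * exp (-(Fintype.card (Fin F) * (ν / 2) / 3)) < 1 := by
    refine card_product_filter_card_le_mul_exp_neg_lt_one hC (by positivity) ?_
    rw [Fintype.card_fin]
    linarith [(div_lt_iff₀ hν0).mp hF]
  have dens_not_good_le (p) (hp : p ∈ small ×ˢ small) :
      (dens {h : C → Fin N | ¬ IsGood a b T p.1 p.2 h} : ℝ) ≤ ν / 2 :=
    dens_not_isGood_le ha0 ha1.le hb0 hb1.le hν0 hT hTN h8 h12 p.1 p.2
      (mem_filter.mp (mem_product.mp hp).2).2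
  obtain ⟨H, hH⟩ := exists_forall_le_card_filter dens_not_good_le union_bound
  refine ⟨H, fun A B hA hB ↦ ?_⟩
  have := hH (A, B) (by simp [small, hA, hB])
  rwa [mul_div_cancel₀ ν two_ne_zero, Fintype.card_fin] at this

/-- Existence of a representative family of hash functions: for every `F` large enough,
there are `F` functions `h₁,…,h_F : C → {1,…,N}` such that for every pair of small
enough subsets `A, B ⊆ C`, at least `(1−ν)·F` of the functions are `(A,B)`-good. -/
theorem stmt6 {C : Type*} [Fintype C] [DecidableEq C] (hC : 2 ≤ Fintype.card C)
    (a b ν : ℝ) (ha0 : 0 < a) (ha1 : a < 1) (hb0 : 0 < b) (hb1 : b < 1)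
    (hν0 : 0 < ν) (hν1 : ν < 1) (hab : a ≤ b)
    (N T : ℕ) (hN : 0 < N) (hT : 0 < T) (hTN : T ≤ N)
    (hTlb : max (3 * b⁻¹ ^ 2 * a⁻¹ * Real.log (8 / ν))
        (45 * a⁻¹ * b⁻¹ * Real.log (12 / ν)) ≤ (T : ℝ))
    (F : ℕ) (hF : 24 * b * N * Real.log (Fintype.card C) / ν < (F : ℝ)) :
    ∃ h : Fin F → C → Fin N,
      ∀ A B : Finset C, (A.card : ℝ) ≤ b * N → (B.card : ℝ) ≤ b * N →
        (1 - ν) * F ≤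
          ((Finset.univ.filter fun i : Fin F => IsGood a b T A B (h i)).card : ℝ) :=
  stmt6_general hC a b ν ha0 ha1 hb0 hb1 hν0 N T hT hTN hTlb F hF
end

section
/- Let C be a finite set, ε ∈ (0,1), N and T positive integers with T ≤ N, and h : C → {1,…,N} a function. Let S_u, S_v ⊆ C, write I = S_u ∩ S_v, U = S_u ∪ S_v, M = max(|S_u|,|S_v|), T_u = Hit^{≤T}(S_u,h,S_u), and T_v = Hit^{≤T}(S_v,h,S_v). Suppose h satisfies: (i) (1−ε/4)·T|I|/N ≤ |I|_h^{≤T}| ≤ (1+ε/4)·T|I|/N; (ii) |Coll^{≤T}(I,h,U)| ≤ (ε/2)·T|I|/N; and (iii) |Coll^{≤T}(U,h,U)| ≤ (ε/2)·T|U|/N. Then the estimate |h(T_u) ∩ h(T_v)|·N/T differs from |I| = |S_u ∩ S_v| by at most ε·M. -/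
/-- `A|_h^{≤T}`: elements of `A` hashing (through `h : C → {1,…,N}`) to a value in `{1,…,T}`. -/
def lowSet {α : Type*} [DecidableEq α] (h : α → ℕ) (T : ℕ) (A : Finset α) : Finset α :=
  A.filter fun c => 1 ≤ h c ∧ h c ≤ T

/-- `Coll^{≤T}(A,h,B)`: elements of `A` hashing to a value in `{1,…,T}` that collide with
a distinct element of `B`. -/
def collSet {α : Type*} [DecidableEq α] (h : α → ℕ) (T : ℕ) (A B : Finset α) : Finset α :=
  A.filter fun c => (1 ≤ h c ∧ h c ≤ T) ∧ ∃ b ∈ B.erase c, h b = h c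

/-- `Hit^{≤T}(A,h,B) = A|_h^{≤T} \ Coll^{≤T}(A,h,B)`. -/
def hitSet {α : Type*} [DecidableEq α] (h : α → ℕ) (T : ℕ) (A B : Finset α) : Finset α :=
  lowSet h T A \ collSet h T A B

/-!
Write `I = Su ∩ Sv`, `U = Su ∪ Sv` and `M = max |Su| |Sv|`. An element of `I` with a low hash value
that nothing else in `U` shares is a hit for both parties, and distinct such elements have distinct
hash values. Conversely, a hash value common to both parties comes either from an element of `I`
with a low hash value or from a low collision inside `U`. So the number of common hash values is at
least `|I|_h^{≤T}| - |Coll^{≤T}(I,h,U)|` and at most `|I|_h^{≤T}| + |Coll^{≤T}(U,h,U)|`. After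
scaling by `N / T`, the errors are at most `(3ε/4)|I|` below and `(ε/4)|I| + (ε/2)|U|` above, and
`|U| + |I| ≤ 2M` makes both at most `εM`.
-/

section HashSets

open Finset

variable {α : Type*} [DecidableEq α] {h : α → ℕ} {T : ℕ} {A A' B B' : Finset α} {c : α}

theorem mem_lowSet : c ∈ lowSet h T A ↔ c ∈ A ∧ 1 ≤ h c ∧ h c ≤ T :=
  mem_filter

theorem mem_collSet :
    c ∈ collSet h T A B ↔ c ∈ lowSet h T A ∧ ∃ b ∈ B, b ≠ c ∧ h b = h c := by
  grind [collSet, lowSet]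

theorem mem_hitSet :
    c ∈ hitSet h T A B ↔ c ∈ lowSet h T A ∧ ∀ b ∈ B, h b = h c → b = c := by
  grind [hitSet, mem_collSet]

theorem lowSet_mono (hA : A ⊆ A') : lowSet h T A ⊆ lowSet h T A' :=
  filter_subset_filter _ hA

theorem collSet_subset_lowSet : collSet h T A B ⊆ lowSet h T A :=
  fun _ hc ↦ (mem_collSet.1 hc).1

theorem hitSet_subset_lowSet : hitSet h T A B ⊆ lowSet h T A :=
  sdiff_subset

theorem collSet_mono (hA : A ⊆ A') (hB : B ⊆ B') : collSet h T A B ⊆ collSet h T A' B' := by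
  intro c hc
  obtain ⟨hlow, b, hb, hbc⟩ := mem_collSet.1 hc
  exact mem_collSet.2 ⟨lowSet_mono hA hlow, b, hB hb, hbc⟩

theorem hitSet_subset_hitSet (hA : A ⊆ A') (hB : B' ⊆ B) :
    hitSet h T A B ⊆ hitSet h T A' B' := by
  intro c hc
  obtain ⟨hlow, huniq⟩ := mem_hitSet.1 hc
  exact mem_hitSet.2 ⟨lowSet_mono hA hlow, fun b hb ↦ huniq b (hB hb)⟩

theorem card_hitSet_add_card_collSet :
    #(hitSet h T A B) + #(collSet h T A B) = #(lowSet h T A) :=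
  card_sdiff_add_card_eq_card collSet_subset_lowSet

theorem injOn_hitSet (hAB : A ⊆ B) : Set.InjOn h (hitSet h T A B) := by
  intro c hc d hd hcd
  have hcB : c ∈ B := hAB (mem_lowSet.1 (hitSet_subset_lowSet hc)).1
  exact (mem_hitSet.1 hd).2 c hcB hcd

theorem image_hitSet_inter_union_subset :
    (hitSet h T (A ∩ B) (A ∪ B)).image h ⊆
      (hitSet h T A A).image h ∩ (hitSet h T B B).image h :=
  subset_inter
    (image_subset_image (hitSet_subset_hitSet inter_subset_left subset_union_left))
    (image_subset_image (hitSet_subset_hitSet inter_subset_right subset_union_right))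

theorem image_lowSet_inter_image_lowSet_subset :
    (lowSet h T A).image h ∩ (lowSet h T B).image h ⊆
      (lowSet h T (A ∩ B) ∪ collSet h T A B).image h := by
  intro y hy
  obtain ⟨hyA, hyB⟩ := mem_inter.1 hy
  obtain ⟨a, ha, rfl⟩ := mem_image.1 hyA
  obtain ⟨b, hb, hba⟩ := mem_image.1 hyB
  have hbB : b ∈ B := (mem_lowSet.1 hb).1
  refine mem_image_of_mem h (mem_union.2 ?_)
  obtain rfl | hne := eq_or_ne b a
  · obtain ⟨haA, hlow⟩ := mem_lowSet.1 ha
    exact .inl (mem_lowSet.2 ⟨mem_inter.2 ⟨haA, hbB⟩, hlow⟩)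
  · exact .inr (mem_collSet.2 ⟨ha, b, hbB, hne, hba⟩)

theorem card_lowSet_inter_le :
    #(lowSet h T (A ∩ B)) ≤
      #((hitSet h T A A).image h ∩ (hitSet h T B B).image h) +
        #(collSet h T (A ∩ B) (A ∪ B)) := by
  have hinj : Set.InjOn h (hitSet h T (A ∩ B) (A ∪ B)) :=
    injOn_hitSet (inter_subset_left.trans subset_union_left)
  rw [← card_hitSet_add_card_collSet (B := A ∪ B), ← card_image_of_injOn hinj]
  gcongr
  exact image_hitSet_inter_union_subset

theorem card_image_hitSet_inter_le :
    #((hitSet h T A A).image h ∩ (hitSet h T B B).image h) ≤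
      #(lowSet h T (A ∩ B)) + #(collSet h T A B) :=
  calc #((hitSet h T A A).image h ∩ (hitSet h T B B).image h)
    _ ≤ #((lowSet h T A).image h ∩ (lowSet h T B).image h) := by
      gcongr <;> exact hitSet_subset_lowSet
    _ ≤ #((lowSet h T (A ∩ B) ∪ collSet h T A B).image h) :=
      card_le_card image_lowSet_inter_image_lowSet_subset
    _ ≤ #(lowSet h T (A ∩ B) ∪ collSet h T A B) := card_image_le
    _ ≤ #(lowSet h T (A ∩ B)) + #(collSet h T A B) := card_union_le _ _

theorem card_union_add_card_inter_le_two_mul_max (A B : Finset α) :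
    #(A ∪ B) + #(A ∩ B) ≤ 2 * max #A #B := by
  rw [card_union_add_card_inter]
  lia

end HashSets

theorem stmt10_general {α : Type*} [DecidableEq α] (ε : ℝ) (hε : 0 ≤ ε)
    (N T : ℕ) (hN : 0 < N) (hT : 0 < T) (h : α → ℕ) (Su Sv : Finset α)
    (hi₁ : (1 - ε / 4) * T * ((Su ∩ Sv).card : ℝ) / N ≤ ((lowSet h T (Su ∩ Sv)).card : ℝ))
    (hi₂ : ((lowSet h T (Su ∩ Sv)).card : ℝ) ≤ (1 + ε / 4) * T * ((Su ∩ Sv).card : ℝ) / N)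
    (hii : ((collSet h T (Su ∩ Sv) (Su ∪ Sv)).card : ℝ)
        ≤ (ε / 2) * T * ((Su ∩ Sv).card : ℝ) / N)
    (hiii : ((collSet h T (Su ∪ Sv) (Su ∪ Sv)).card : ℝ)
        ≤ (ε / 2) * T * ((Su ∪ Sv).card : ℝ) / N) :
    |(((hitSet h T Su Su).image h ∩ (hitSet h T Sv Sv).image h).card : ℝ) * N / T
        - ((Su ∩ Sv).card : ℝ)|
      ≤ ε * max (Su.card : ℝ) (Sv.card : ℝ) := by
  have hUM : ((Su ∪ Sv).card : ℝ) + (Su ∩ Sv).card ≤ 2 * max (Su.card : ℝ) Sv.card := by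
    exact_mod_cast card_union_add_card_inter_le_two_mul_max Su Sv
  set X := ((hitSet h T Su Su).image h ∩ (hitSet h T Sv Sv).image h).card
  set I := (Su ∩ Sv).card
  set U := (Su ∪ Sv).card
  set M := max (Su.card : ℝ) (Sv.card : ℝ)
  have hlower : ((lowSet h T (Su ∩ Sv)).card : ℝ) ≤
      X + (collSet h T (Su ∩ Sv) (Su ∪ Sv)).card := by
    exact_mod_cast card_lowSet_inter_le
  have hupper : (X : ℝ) ≤
      (lowSet h T (Su ∩ Sv)).card + (collSet h T (Su ∪ Sv) (Su ∪ Sv)).card := by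
    exact_mod_cast card_image_hitSet_inter_le.trans (Nat.add_le_add_left (Finset.card_le_card
      (collSet_mono Finset.subset_union_left Finset.subset_union_right)) _)
  have hIM : (I : ℝ) ≤ M :=
    le_max_of_le_left (mod_cast Finset.card_le_card Finset.inter_subset_left)
  have hεIM : ε * I ≤ ε * M := by gcongr
  have hεUM : ε * (U + I) ≤ ε * (2 * M) := by gcongr
  have hεI : 0 ≤ ε * I := by positivity
  rw [abs_sub_le_iff]
  constructor
  · have hX : (X : ℝ) ≤ ((1 + ε / 4) * I + ε / 2 * U) * T / N := by
      linear_combination hupper + hi₂ + hiii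
    have hscaled : (X : ℝ) * N / T ≤ (1 + ε / 4) * I + ε / 2 * U := by
      rwa [div_le_iff₀ (by positivity), ← le_div_iff₀ (by positivity)]
    linarith
  · have hX : (1 - 3 * ε / 4) * I * T / N ≤ (X : ℝ) := by
      linear_combination hlower + hi₁ + hii
    have hscaled : (1 - 3 * ε / 4) * I ≤ (X : ℝ) * N / T := by
      rwa [le_div_iff₀ (by positivity), ← div_le_iff₀ (by positivity)]
    linarith

/-- Deterministic core of EstimateSimilarity: if the hash function behaves well on the
intersection and union of `S_u` and `S_v`, then `|h(T_u) ∩ h(T_v)|·N/T` estimates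
`|S_u ∩ S_v|` within `ε·max(|S_u|,|S_v|)`. -/
theorem stmt10 {α : Type*} [Fintype α] [DecidableEq α] (ε : ℝ) (hε0 : 0 < ε) (hε1 : ε < 1)
    (N T : ℕ) (hN : 0 < N) (hT : 0 < T) (hTN : T ≤ N)
    (h : α → ℕ) (hrange : ∀ x, 1 ≤ h x ∧ h x ≤ N) (Su Sv : Finset α)
    (hi₁ : (1 - ε / 4) * T * ((Su ∩ Sv).card : ℝ) / N ≤ ((lowSet h T (Su ∩ Sv)).card : ℝ))
    (hi₂ : ((lowSet h T (Su ∩ Sv)).card : ℝ) ≤ (1 + ε / 4) * T * ((Su ∩ Sv).card : ℝ) / N)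
    (hii : ((collSet h T (Su ∩ Sv) (Su ∪ Sv)).card : ℝ)
        ≤ (ε / 2) * T * ((Su ∩ Sv).card : ℝ) / N)
    (hiii : ((collSet h T (Su ∪ Sv) (Su ∪ Sv)).card : ℝ)
        ≤ (ε / 2) * T * ((Su ∪ Sv).card : ℝ) / N) :
    |(((hitSet h T Su Su).image h ∩ (hitSet h T Sv Sv).image h).card : ℝ) * N / T
        - ((Su ∩ Sv).card : ℝ)|
      ≤ ε * max (Su.card : ℝ) (Sv.card : ℝ) := by
  exact stmt10_general ε hε0.le N T hN hT h Su Sv hi₁ hi₂ hii hiii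
end
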